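/- Incompleteness of the combined restriction (Example 1): let the theory consist of the clause {P⁺, Q⁺} with selected literal P⁺ and the clause {P⁻, Q⁺} with selected literal P⁻, and let the remaining clause be {Q⁻}. Consider resolution restricted so that (i) at most one of the two parent clauses of any inference is a theory clause, and (ii) whenever a parent is a theory clause, the literal resolved upon in it is its selected literal. Then the empty clause is not derivable from {{P⁺, Q⁺}, {P⁻, Q⁺}, {Q⁻}} under this restriction; in fact the set of derivable clauses is exactly the initial set of three clauses. -/

import Mathlib

/-!
Any parent clause in `S₀` with a positive literal is a theory clause, so the positive literal resolved
upon must be selected; the only positive selected literal is `P⁺` in `C₁`. The negative parent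
would then be a clause of `S₀` containing `P⁻`, i.e. `C₂`, but two theory clauses may not be
resolved with each other. Hence no inference applies to clauses of `S₀`, and `S₀` is already closed.
-/

/-- The two atoms `P` and `Q`. -/
inductive At | P | Q
deriving DecidableEq

/-- A literal is an atom together with a polarity (`true` = positive). -/
abbrev Lit := At × Bool

/-- A clause is a finite set of literals. -/
abbrev Clause := Finset Lit

/-- Restricted resolution derivability, given a set `theory` of theory clauses
and a selection relation `Sel` (relating each theory clause to its selected
literal): the least set of clauses containing `S` and closed under resolution
inferences (deriving `C ∪ D` from parents `C ∪ {a⁺}` and `D ∪ {a⁻}` with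
`a⁺ ∉ C`, `a⁻ ∉ D`) in which at most one parent is a theory clause and,
whenever a parent is a theory clause, the literal resolved upon in that parent
is its selected literal. -/
inductive RDer (theory : Set Clause) (Sel : Clause → Lit → Prop) (S : Set Clause) :
    Clause → Prop
  | mem {C} : C ∈ S → RDer theory Sel S C
  | res {a : At} {C D : Clause} :
      RDer theory Sel S (insert (a, true) C) →
      RDer theory Sel S (insert (a, false) D) →
      (a, true) ∉ C → (a, false) ∉ D →
      ¬(insert (a, true) C ∈ theory ∧ insert (a, false) D ∈ theory) →
      (insert (a, true) C ∈ theory → Sel (insert (a, true) C) (a, true)) →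
      (insert (a, false) D ∈ theory → Sel (insert (a, false) D) (a, false)) →
      RDer theory Sel S (C ∪ D)

/-- The theory clause {P⁺, Q⁺}. -/
def C₁ : Clause := {(At.P, true), (At.Q, true)}

/-- The theory clause {P⁻, Q⁺}. -/
def C₂ : Clause := {(At.P, false), (At.Q, true)}

/-- The theory consists of the clauses C₁ and C₂. -/
def theory : Set Clause := {C₁, C₂}

/-- The selected literal of C₁ is P⁺ and that of C₂ is P⁻. -/
def Sel : Clause → Lit → Prop := fun C l =>
  (C = C₁ ∧ l = (At.P, true)) ∨ (C = C₂ ∧ l = (At.P, false))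

/-- The initial clause set {{P⁺, Q⁺}, {P⁻, Q⁺}, {Q⁻}}. -/
def S₀ : Set Clause := {C₁, C₂, {(At.Q, false)}}

/-- No resolution inference obeying the restriction has both of its parents in `S₀`. -/
theorem no_inference {a : At} {E F : Clause} (hE : E ∈ S₀) (hF : F ∈ S₀)
    (haE : (a, true) ∈ E) (haF : (a, false) ∈ F)
    (hth : ¬(E ∈ theory ∧ F ∈ theory)) (hsel : E ∈ theory → Sel E (a, true)) : False := by
  have hE' : E ∈ theory := by
    rcases hE with rfl | rfl | rfl
    · exact Or.inl rfl
    · exact Or.inr rfl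
    · simp at haE
  have ha : a = At.P := by
    rcases hsel hE' with ⟨-, h⟩ | ⟨-, h⟩
    · exact congrArg Prod.fst h
    · exact congrArg Prod.fst h
  subst ha
  rcases hF with rfl | rfl | rfl
  · simp [C₁] at haF
  · exact hth ⟨hE', Or.inr rfl⟩
  · simp at haF

theorem mem_of_rDer {C : Clause} (h : RDer theory Sel S₀ C) : C ∈ S₀ := by
  induction h with
  | mem h => exact h
  | res _ _ _ _ hth hsel _ hE hF =>
    exact (no_inference hE hF (Finset.mem_insert_self _ _) (Finset.mem_insert_self _ _)
      hth hsel).elim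

/-- Incompleteness of the combined restriction: under the combined clause- and
literal-selection restriction, the empty clause is not derivable from S₀; in
fact the set of derivable clauses is exactly S₀. -/
theorem stmt6 :
    ¬ RDer theory Sel S₀ (∅ : Clause) ∧
    ∀ C : Clause, RDer theory Sel S₀ C ↔ C ∈ S₀ := by
  refine ⟨fun h => ?_, fun C => ⟨mem_of_rDer, RDer.mem⟩⟩
  rcases mem_of_rDer h with h | h | h <;> revert h <;> decide
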